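/- Suppose y* ∈ C¹_rd(𝕋;ℝⁿ) is a weak local minimizer of 𝓛 with both endpoints fixed, i.e. there is δ > 0 such that 𝓛[y*] ≤ 𝓛[y] for every y ∈ C¹_rd(𝕋;ℝⁿ) with y(a) = y*(a), y(b) = y*(b) and ‖y − y*‖_{1,∞} < δ. Then the Euler–Lagrange equation in delta-integral form holds: for every antiderivative F of t ↦ L_y(t, y*(t), y*^Δ(t)) there exists a constant c ∈ ℝⁿ such that L_v(t, y*(t), y*^Δ(t)) = F(σ(t)) + c for all t ∈ 𝕋^k (equivalently, L_v(t, y*(t), y*^Δ(t)) = ∫_a^{σ(t)} L_y(ξ, y*(ξ), y*^Δ(ξ)) Δξ + c). -/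

import Mathlib

open Set Filter

noncomputable section

-- Forward jump operator of the set `S`.
open Classical in
def tsSigma (S : Set ℝ) (t : ℝ) : ℝ :=
  if ({s | s ∈ S ∧ t < s}).Nonempty then sInf {s | s ∈ S ∧ t < s} else t

-- Backward jump operator of the set `S`.
open Classical in
def tsRho (S : Set ℝ) (t : ℝ) : ℝ :=
  if ({s | s ∈ S ∧ s < t}).Nonempty then sSup {s | s ∈ S ∧ s < t} else t

/-- Graininess function. -/
def tsMu (S : Set ℝ) (t : ℝ) : ℝ := tsSigma S t - t

/-- `S^k = S \ (ρ(max S), max S]`. -/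
def tsTk (S : Set ℝ) : Set ℝ := S \ Set.Ioc (tsRho S (sSup S)) (sSup S)

/-- Delta differentiability at `t` of `f` regarded as a function on the time scale `S`,
with delta derivative `d`. -/
def deltaDiffAt {E : Type*} [NormedAddCommGroup E] [NormedSpace ℝ E]
    (S : Set ℝ) (f : ℝ → E) (t : ℝ) (d : E) : Prop :=
  ∀ ε > 0, ∃ δ > 0, ∀ s ∈ S ∩ Set.Ioo (t - δ) (t + δ),
    ‖f (tsSigma S t) - f s - (tsSigma S t - s) • d‖ ≤ ε * |tsSigma S t - s|

/-- rd-continuity of `f` on its domain `S`: continuity (within `S`) at right-dense points and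
existence of a finite left-sided limit along `S` at left-dense points. -/
def RdContinuousOn {E : Type*} [NormedAddCommGroup E]
    (S : Set ℝ) (f : ℝ → E) : Prop :=
  ∀ t ∈ S, (tsSigma S t = t → ContinuousWithinAt f S t) ∧
    (tsRho S t = t → ∃ l : E, Filter.Tendsto f (nhdsWithin t (S ∩ Set.Iio t)) (nhds l))

/-- `y ∈ C¹_rd(T)`, with delta derivative `yd`. -/
def C1rd {E : Type*} [NormedAddCommGroup E] [NormedSpace ℝ E]
    (T : Set ℝ) (y yd : ℝ → E) : Prop :=
  (∀ t ∈ tsTk T, deltaDiffAt T y t (yd t)) ∧ RdContinuousOn (tsTk T) yd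

/-- `F` is a delta antiderivative of `f` on the time scale `S`; the delta integral
`∫_c^d f Δt` is `F d - F c` for any such `F`. -/
def IsDeltaAntideriv {E : Type*} [NormedAddCommGroup E] [NormedSpace ℝ E]
    (S : Set ℝ) (f F : ℝ → E) : Prop :=
  ∀ t ∈ tsTk S, deltaDiffAt S F t (f t)

/-- Sup norm of `f` over the set `S`. -/
def tsSupNorm {E : Type*} [NormedAddCommGroup E] (S : Set ℝ) (f : ℝ → E) : ℝ :=
  sSup ((fun t => ‖f t‖) '' S)

abbrev En (n : ℕ) : Type := EuclideanSpace ℝ (Fin n)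

/-!
The delta integral over `T` is the Lebesgue integral over `[a, b]` of the extension `f ∘ tkFloor`
that is constant on every gap of `T`. Differentiating the integral of `L` along `y* + s η` under
the integral sign gives the vanishing of the first variation `∫ (⟪L_y, η⟫ + ⟪L_v, η^Δ⟫) Δt` for
every `η` that vanishes at the endpoints. Since `(F ⬝ η)^Δ = F^σ ⬝ η^Δ + F^Δ ⬝ η`, this says that
`φ = L_v - F ∘ σ` is orthogonal to every rd-continuous `ψ = η^Δ` of mean zero, and du Bois-Reymond's
argument makes `φ` constant.

The choice `ψ = φ - mean φ` of the classical argument is not available: if `max T^k` is left-dense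
and right-scattered, `φ` need not be continuous there, while `η^Δ` has to be, because `max T^k` is
right-dense in `T^k`. Continuous test functions still determine `φ` almost everywhere, and one-sided
continuity determines it everywhere.
-/

open Asymptotics MeasureTheory Topology
open scoped BoundedContinuousFunction ContDiff InnerProductSpace

section JumpOperators

variable {S : Set ℝ} {b s t u : ℝ}

lemma le_tsSigma (S : Set ℝ) (t : ℝ) : t ≤ tsSigma S t := by
  unfold tsSigma
  split_ifs with h
  · exact le_csInf h fun s hs => hs.2.le
  · rfl

lemma tsSigma_le_of_mem (hs : s ∈ S) (hts : t < s) : tsSigma S t ≤ s := by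
  have hs' : s ∈ {s | s ∈ S ∧ t < s} := ⟨hs, hts⟩
  rw [tsSigma, if_pos ⟨s, hs'⟩]
  exact csInf_le ⟨t, fun r hr => hr.2.le⟩ hs'

lemma tsSigma_mem (hS : IsClosed S) (ht : t ∈ S) : tsSigma S t ∈ S := by
  unfold tsSigma
  split_ifs with h
  · exact closure_minimal (fun s hs => hs.1) hS (csInf_mem_closure h ⟨t, fun r hr => hr.2.le⟩)
  · exact ht

lemma exists_mem_Ioo_of_tsSigma_lt (hs : s ∈ S) (hts : t < s) (hu : tsSigma S t < u) :
    ∃ r ∈ S, r ∈ Ioo t u := by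
  have hne : {s | s ∈ S ∧ t < s}.Nonempty := ⟨s, hs, hts⟩
  rw [tsSigma, if_pos hne] at hu
  obtain ⟨r, hr, hru⟩ := exists_lt_of_csInf_lt hne hu
  exact ⟨r, hr.1, hr.2, hru⟩

lemma tsSigma_eq_self_of_isGreatest (hb : IsGreatest S b) : tsSigma S b = b :=
  if_neg fun ⟨_, hs, hbs⟩ => (hb.2 hs).not_gt hbs

lemma nhdsWithin_inter_Ioi_eq_bot (ht : tsSigma S t ≠ t) : 𝓝[S ∩ Ioi t] t = ⊥ := by
  have hlt : t < tsSigma S t := (le_tsSigma S t).lt_of_ne' ht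
  refine empty_mem_iff_bot.mp ?_
  filter_upwards [self_mem_nhdsWithin, mem_nhdsWithin_of_mem_nhds (Iio_mem_nhds hlt)] with s hs hsσ
  exact (tsSigma_le_of_mem hs.1 hs.2).not_gt hsσ

lemma le_tsRho_of_mem (hs : s ∈ S) (hst : s < t) : s ≤ tsRho S t := by
  have hs' : s ∈ {s | s ∈ S ∧ s < t} := ⟨hs, hst⟩
  rw [tsRho, if_pos ⟨s, hs'⟩]
  exact le_csSup ⟨t, fun r hr => hr.2.le⟩ hs'

lemma tsRho_le (S : Set ℝ) (t : ℝ) : tsRho S t ≤ t := by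
  unfold tsRho
  split_ifs with h
  · exact csSup_le h fun s hs => hs.2.le
  · rfl

lemma exists_mem_Ioo_of_lt_tsRho (hs : s ∈ S) (hst : s < t) (hu : u < tsRho S t) :
    ∃ r ∈ S, r ∈ Ioo u t := by
  have hne : {s | s ∈ S ∧ s < t}.Nonempty := ⟨s, hs, hst⟩
  rw [tsRho, if_pos hne] at hu
  obtain ⟨r, hr, hur⟩ := exists_lt_of_lt_csSup hne hu
  exact ⟨r, hr.1, hur, hr.2⟩

lemma nhdsWithin_inter_Iio_eq_bot (ht : tsRho S t ≠ t) : 𝓝[S ∩ Iio t] t = ⊥ := by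
  have hlt : tsRho S t < t := (tsRho_le S t).lt_of_ne ht
  refine empty_mem_iff_bot.mp ?_
  filter_upwards [self_mem_nhdsWithin, mem_nhdsWithin_of_mem_nhds (Ioi_mem_nhds hlt)] with s hs hρs
  exact (le_tsRho_of_mem hs.1 hs.2).not_gt hρs

end JumpOperators

/-- `T` is a time scale with least point `a` and greatest point `b > a`: what the paper calls
`[a, b] ∩ 𝕋₀`. -/
structure IsTimeInterval (T : Set ℝ) (a b : ℝ) : Prop where
  isCompact : IsCompact T
  isLeast : IsLeast T a
  isGreatest : IsGreatest T b
  lt : a < b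

lemma isTimeInterval_Icc_inter {T₀ : Set ℝ} {a b : ℝ} (hT₀ : IsClosed T₀) (ha : a ∈ T₀)
    (hb : b ∈ T₀) (hab : a < b) : IsTimeInterval (Icc a b ∩ T₀) a b where
  isCompact := isCompact_Icc.inter_right hT₀
  isLeast := ⟨⟨left_mem_Icc.mpr hab.le, ha⟩, fun _ ht => ht.1.1⟩
  isGreatest := ⟨⟨right_mem_Icc.mpr hab.le, hb⟩, fun _ ht => ht.1.2⟩
  lt := hab

namespace IsTimeInterval

variable {T : Set ℝ} {a b t : ℝ} (hT : IsTimeInterval T a b)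

include hT

lemma left_mem : a ∈ T := hT.isLeast.1

lemma right_mem : b ∈ T := hT.isGreatest.1

lemma left_le (ht : t ∈ T) : a ≤ t := hT.isLeast.2 ht

lemma le_right (ht : t ∈ T) : t ≤ b := hT.isGreatest.2 ht

lemma tsTk_eq : tsTk T = T ∩ Iic (tsRho T b) := by
  rw [tsTk, hT.isGreatest.csSup_eq]
  ext t
  exact and_congr_right fun ht =>
    ⟨fun h => not_lt.mp fun hlt => h ⟨hlt, hT.le_right ht⟩, fun h hlt => hlt.1.not_ge h⟩

lemma mem_tsTk_of_lt (ht : t ∈ T) (htb : t < b) : t ∈ tsTk T := by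
  rw [hT.tsTk_eq]
  exact ⟨ht, le_tsRho_of_mem ht htb⟩

lemma left_mem_tsTk : a ∈ tsTk T := hT.mem_tsTk_of_lt hT.left_mem hT.lt

lemma isCompact_tsTk : IsCompact (tsTk T) := by
  rw [hT.tsTk_eq]
  exact hT.isCompact.inter_right isClosed_Iic

lemma tsSigma_mem (ht : t ∈ T) : tsSigma T t ∈ T := _root_.tsSigma_mem hT.isCompact.isClosed ht

lemma nhdsLT_neBot_of_right_mem_tsTk (hb : b ∈ tsTk T) : (𝓝[tsTk T ∩ Iio b] b).NeBot := by
  have hρ : b ≤ tsRho T b := by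
    rw [hT.tsTk_eq] at hb
    exact hb.2
  refine mem_closure_iff_nhdsWithin_neBot.mp (Metric.mem_closure_iff.mpr fun ε hε => ?_)
  obtain ⟨r, hr, hbr, hrb⟩ :=
    exists_mem_Ioo_of_lt_tsRho hT.left_mem hT.lt ((sub_lt_self b hε).trans_le hρ)
  refine ⟨r, ⟨hT.mem_tsTk_of_lt hr hrb, hrb⟩, ?_⟩
  rw [Real.dist_eq, abs_of_pos (sub_pos.mpr hrb)]
  exact sub_lt_comm.mp hbr

lemma tsSigma_tsTk_eq_self (ht : t ∈ tsTk T) (hσ : tsSigma T t = t) :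
    tsSigma (tsTk T) t = t := by
  rcases (hT.le_right ht.1).eq_or_lt with rfl | htb
  · exact tsSigma_eq_self_of_isGreatest ⟨ht, fun s hs => hT.le_right hs.1⟩
  · by_contra hne
    have hlt : t < tsSigma (tsTk T) t := (le_tsSigma _ _).lt_of_ne' hne
    obtain ⟨r, hr, htr, hru⟩ :=
      exists_mem_Ioo_of_tsSigma_lt hT.right_mem htb (hσ.trans_lt (lt_min hlt htb))
    have hrK : r ∈ tsTk T := hT.mem_tsTk_of_lt hr (hru.trans_le (min_le_right _ _))
    exact (tsSigma_le_of_mem hrK htr).not_gt (hru.trans_le (min_le_left _ _))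

end IsTimeInterval

lemma RdContinuousOn.of_continuousOn {E : Type*} [NormedAddCommGroup E] {S : Set ℝ} {f : ℝ → E}
    (hf : ContinuousOn f S) : RdContinuousOn S f := fun t ht =>
  ⟨fun _ => hf t ht, fun _ => ⟨f t, (hf t ht).mono inter_subset_left⟩⟩

lemma RdContinuousOn.add {E : Type*} [NormedAddCommGroup E] {S : Set ℝ} {f g : ℝ → E}
    (hf : RdContinuousOn S f) (hg : RdContinuousOn S g) :
    RdContinuousOn S fun t => f t + g t := fun t ht =>
  ⟨fun hσ => ((hf t ht).1 hσ).add ((hg t ht).1 hσ), fun hρ =>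
    let ⟨l, hl⟩ := (hf t ht).2 hρ
    let ⟨m, hm⟩ := (hg t ht).2 hρ
    ⟨l + m, hl.add hm⟩⟩

section DeltaDerivative

variable {E F G : Type*} [NormedAddCommGroup E] [NormedSpace ℝ E] [NormedAddCommGroup F]
  [NormedSpace ℝ F] [NormedAddCommGroup G] [NormedSpace ℝ G] {S : Set ℝ} {t : ℝ}

lemma deltaDiffAt_iff_isLittleO {f : ℝ → E} {d : E} :
    deltaDiffAt S f t d ↔
      (fun s => f (tsSigma S t) - f s - (tsSigma S t - s) • d)
        =o[𝓝[S] t] fun s => tsSigma S t - s := by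
  simp only [isLittleO_iff, deltaDiffAt, Real.norm_eq_abs, nhdsWithin,
    ((nhds_basis_Ioo_pos t).inf_principal S).eventually_iff, inter_comm S]

namespace deltaDiffAt

variable {f g : ℝ → E} {d e : E}

lemma sigma_sub (hf : deltaDiffAt S f t d) (ht : t ∈ S) :
    f (tsSigma S t) - f t = (tsSigma S t - t) • d := by
  have hzero := isLittleO_pure.mp
    ((deltaDiffAt_iff_isLittleO.mp hf).mono (pure_le_nhdsWithin ht))
  exact sub_eq_zero.mp hzero

lemma continuousWithinAt (hf : deltaDiffAt S f t d) (ht : t ∈ S) :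
    ContinuousWithinAt f S t := by
  have hm : Tendsto (fun s => tsSigma S t - s) (𝓝[S] t) (𝓝 (tsSigma S t - t)) :=
    (continuous_const.sub continuous_id).continuousWithinAt
  have hr := (isLittleO_one_iff ℝ).mp
    ((deltaDiffAt_iff_isLittleO.mp hf).trans_isBigO (hm.isBigO_one ℝ))
  have hlim := ((tendsto_const_nhds (x := f (tsSigma S t))).sub hr).sub (hm.smul_const d)
  rw [← hf.sigma_sub ht, sub_zero, sub_sub_cancel] at hlim
  exact hlim.congr fun s => by abel

lemma add (hf : deltaDiffAt S f t d) (hg : deltaDiffAt S g t e) :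
    deltaDiffAt S (fun s => f s + g s) t (d + e) := by
  rw [deltaDiffAt_iff_isLittleO] at *
  refine (hf.add hg).congr_left fun s => ?_
  rw [smul_add]
  abel

lemma const_smul (hf : deltaDiffAt S f t d) (c : ℝ) :
    deltaDiffAt S (fun s => c • f s) t (c • d) := by
  rw [deltaDiffAt_iff_isLittleO] at *
  refine (hf.const_smul_left c).congr_left fun s => ?_
  rw [Pi.smul_apply, smul_sub, smul_sub, smul_comm c]

lemma sub (hf : deltaDiffAt S f t d) (hg : deltaDiffAt S g t e) :
    deltaDiffAt S (fun s => f s - g s) t (d - e) := by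
  simpa only [neg_one_smul, ← sub_eq_add_neg] using hf.add (hg.const_smul (-1))

lemma bilinear (B : E →L[ℝ] F →L[ℝ] G) {k : ℝ → F} {c : F} (hf : deltaDiffAt S f t d)
    (hk : deltaDiffAt S k t c) (ht : t ∈ S) :
    deltaDiffAt S (fun s => B (f s) (k s)) t (B (f (tsSigma S t)) c + B d (k t)) := by
  have hkt : Tendsto (fun s => k s - k t) (𝓝[S] t) (𝓝 0) :=
    tendsto_sub_nhds_zero_iff.mpr (hk.continuousWithinAt ht)
  have hk1 : k =O[𝓝[S] t] fun _ => (1 : ℝ) := (hk.continuousWithinAt ht).isBigO_one ℝ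
  rw [deltaDiffAt_iff_isLittleO] at *
  have h₁ := ((B (f (tsSigma S t))).isBigO_comp _ _).trans_isLittleO hk
  have h₂ := (B.isBoundedBilinearMap.isBigO_comp (l := 𝓝[S] t)).trans_isLittleO
    (hf.norm_left.mul_isBigO hk1.norm_left)
  have h₃ := (isBigO_refl (fun s => tsSigma S t - s) (𝓝[S] t)).smul_isLittleO
    (((B d).isBigO_comp _ _).trans_isLittleO ((isLittleO_one_iff ℝ).mpr hkt))
  simp only [mul_one, smul_eq_mul] at h₂ h₃
  refine ((h₁.add h₂).add h₃).congr_left fun s => ?_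
  simp only [map_sub, map_smul, smul_sub, smul_add, sub_apply,
    smul_apply]
  abel

end deltaDiffAt

lemma deltaDiffAt_of_tsSigma_ne {f : ℝ → E} {d : E} (hσ : tsSigma S t ≠ t)
    (hf : ContinuousWithinAt f S t) (hd : f (tsSigma S t) - f t = (tsSigma S t - t) • d) :
    deltaDiffAt S f t d := by
  rw [deltaDiffAt_iff_isLittleO]
  have hm : Tendsto (fun s => tsSigma S t - s) (𝓝[S] t) (𝓝 (tsSigma S t - t)) :=
    (continuous_const.sub continuous_id).continuousWithinAt
  have hr : Tendsto (fun s => f (tsSigma S t) - f s - (tsSigma S t - s) • d) (𝓝[S] t) (𝓝 0) := by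
    rw [← sub_self ((tsSigma S t - t) • d)]
    nth_rw 1 [← hd]
    exact (hf.const_sub _).sub (hm.smul_const d)
  have hne := sub_ne_zero.mpr hσ
  exact ((isLittleO_const_iff hne).mpr hr).trans_isBigO
    ((isEquivalent_const_iff_tendsto hne).mpr hm).isBigO_symm

lemma RdContinuousOn.const_smul {f : ℝ → E} (hf : RdContinuousOn S f) (c : ℝ) :
    RdContinuousOn S fun t => c • f t := fun t ht =>
  ⟨fun hσ => ((hf t ht).1 hσ).const_smul c, fun hρ =>
    let ⟨l, hl⟩ := (hf t ht).2 hρ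
    ⟨c • l, hl.const_smul c⟩⟩

lemma C1rd.add {y z yd zd : ℝ → E} (hy : C1rd S y yd) (hz : C1rd S z zd) :
    C1rd S (fun t => y t + z t) fun t => yd t + zd t :=
  ⟨fun t ht => (hy.1 t ht).add (hz.1 t ht), hy.2.add hz.2⟩

lemma C1rd.const_smul {y yd : ℝ → E} (hy : C1rd S y yd) (c : ℝ) :
    C1rd S (fun t => c • y t) fun t => c • yd t :=
  ⟨fun t ht => (hy.1 t ht).const_smul c, hy.2.const_smul c⟩

end DeltaDerivative

section MeanValueInequality

variable {E : Type*} [NormedAddCommGroup E] [NormedSpace ℝ E] {S T : Set ℝ} {a b t u : ℝ}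
  {f F G : ℝ → E}

lemma deltaDiffAt.exists_gt_norm_sub_le {d : E} {C : ℝ} (hF : deltaDiffAt S F t d)
    (hS : IsClosed S) (ht : t ∈ S) (hu : u ∈ S) (htu : t < u) (hd : ‖d‖ < C) :
    ∃ s ∈ S, t < s ∧ ‖F s - F t‖ ≤ C * (s - t) := by
  rcases (le_tsSigma S t).eq_or_lt with hσ | hσ
  · obtain ⟨δ, hδ, hclose⟩ := hF (C - ‖d‖) (sub_pos.mpr hd)
    rw [← hσ] at hclose
    obtain ⟨s, hs, hts, hsδ⟩ :=
      exists_mem_Ioo_of_tsSigma_lt hu htu (hσ.symm.trans_lt (lt_add_of_pos_right t hδ))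
    refine ⟨s, hs, hts, ?_⟩
    have hgap : |t - s| = s - t := by rw [abs_sub_comm, abs_of_pos (sub_pos.mpr hts)]
    calc ‖F s - F t‖ = ‖F t - F s‖ := norm_sub_rev _ _
      _ ≤ ‖F t - F s - (t - s) • d‖ + ‖(t - s) • d‖ := norm_le_norm_sub_add _ _
      _ ≤ (C - ‖d‖) * |t - s| + |t - s| * ‖d‖ :=
          add_le_add (hclose s ⟨hs, by linarith, hsδ⟩) (norm_smul_le _ _)
      _ = C * (s - t) := by rw [hgap]; ring
  · refine ⟨tsSigma S t, tsSigma_mem hS ht, hσ, ?_⟩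
    have hgap : 0 < tsSigma S t - t := sub_pos.mpr hσ
    rw [hF.sigma_sub ht, norm_smul, Real.norm_of_nonneg hgap.le, mul_comm]
    gcongr

lemma IsTimeInterval.continuousOn_of_isDeltaAntideriv (hT : IsTimeInterval T a b)
    (hF : IsDeltaAntideriv T f F) : ContinuousOn F T := by
  intro t ht
  by_cases htk : t ∈ tsTk T
  · exact (hF t htk).continuousWithinAt ht
  · obtain rfl : t = b := (hT.le_right ht).eq_of_not_lt fun htb => htk (hT.mem_tsTk_of_lt ht htb)
    have hρ : tsRho T t ≠ t := fun hρ => htk (hT.tsTk_eq ▸ ⟨ht, hρ.ge⟩)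
    have hsub : T ⊆ insert t (T ∩ Iio t) := fun s hs =>
      (hT.le_right hs).eq_or_lt.imp_right fun hst => ⟨hs, hst⟩
    refine ContinuousWithinAt.mono ?_ hsub
    rw [ContinuousWithinAt, nhdsWithin_insert, nhdsWithin_inter_Iio_eq_bot hρ, sup_bot_eq]
    exact tendsto_pure_nhds F t

lemma IsTimeInterval.norm_sub_le_of_isDeltaAntideriv {C : ℝ} (hT : IsTimeInterval T a b)
    (hF : IsDeltaAntideriv T f F) (hf : ∀ t ∈ tsTk T, ‖f t‖ ≤ C) :
    ‖F b - F a‖ ≤ C * (b - a) := by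
  suffices h : ∀ C' > C, ‖F b - F a‖ ≤ C' * (b - a) by
    refine (div_le_iff₀ (sub_pos.mpr hT.lt)).mp (le_of_forall_gt_imp_ge_of_dense fun C' hC' => ?_)
    exact (div_le_iff₀ (sub_pos.mpr hT.lt)).mpr (h C' hC')
  intro C' hC'
  let A : Set ℝ := {t ∈ T | ‖F t - F a‖ ≤ C' * (t - a)}
  have hFc := hT.continuousOn_of_isDeltaAntideriv hF
  have hA : IsCompact A := hT.isCompact.of_isClosed_subset
    (hT.isCompact.isClosed.isClosed_le (hFc.sub continuousOn_const).norm (by fun_prop))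
    (sep_subset _ _)
  obtain ⟨c, ⟨hc, hcA⟩, hc_max⟩ := hA.exists_isGreatest ⟨a, hT.left_mem, by simp⟩
  rcases (hT.le_right hc).eq_or_lt with rfl | hcb
  · exact hcA
  have hck := hT.mem_tsTk_of_lt hc hcb
  obtain ⟨s, hs, hcs, hFs⟩ := (hF c hck).exists_gt_norm_sub_le hT.isCompact.isClosed hc
    hT.right_mem hcb ((hf c hck).trans_lt hC')
  have hsA : ‖F s - F a‖ ≤ C' * (s - a) := calc
    ‖F s - F a‖ ≤ ‖F s - F c‖ + ‖F c - F a‖ := norm_sub_le_norm_sub_add_norm_sub _ _ _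
    _ ≤ C' * (s - c) + C' * (c - a) := add_le_add hFs hcA
    _ = C' * (s - a) := by ring
  exact absurd (hc_max ⟨hs, hsA⟩) hcs.not_ge

lemma IsTimeInterval.sub_eq_sub_of_isDeltaAntideriv (hT : IsTimeInterval T a b)
    (hF : IsDeltaAntideriv T f F) (hG : IsDeltaAntideriv T f G) : F b - F a = G b - G a := by
  have hFG : IsDeltaAntideriv T (fun _ => 0) fun t => F t - G t := fun t ht => by
    simpa only [sub_self] using (hF t ht).sub (hG t ht)
  have h := hT.norm_sub_le_of_isDeltaAntideriv hFG fun t _ => norm_zero.le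
  rw [zero_mul, norm_le_zero_iff, sub_eq_zero] at h
  exact sub_eq_sub_iff_sub_eq_sub.mpr h

end MeanValueInequality

/-- The rd-continuous functions `T^k → X`, with right-density of a point tested in `T`. The
predicate `RdContinuousOn (tsTk T)` tests it in `T^k`, where `max T^k` is always right-dense: it
therefore demands continuity there even if `T` has a gap to the right of `max T^k`, a demand that
`F ∘ σ` can fail for `F` continuous. -/
structure RdContinuousOnTk {X : Type*} [TopologicalSpace X] (T : Set ℝ) (f : ℝ → X) : Prop where
  continuousWithinAt : ∀ ⦃t⦄, t ∈ tsTk T → tsSigma T t = t → ContinuousWithinAt f (tsTk T) t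
  exists_tendsto_left : ∀ ⦃t⦄, t ∈ tsTk T → ∃ l, Tendsto f (𝓝[tsTk T ∩ Iio t] t) (𝓝 l)

lemma nhdsWithin_eq_left_sup_right (K : Set ℝ) (t : ℝ) :
    𝓝[K] t = 𝓝[K ∩ Iio t] t ⊔ 𝓝[K ∩ Ici t] t := by
  rw [← nhdsWithin_union, ← inter_union_distrib_left, Iio_union_Ici, inter_univ]

lemma tendsto_comp_of_continuousOn {ι X Y : Type*} [TopologicalSpace X] [TopologicalSpace Y]
    {l : Filter ι} {T : Set ℝ} {t : ℝ} {x : X} {Q : ℝ → X → Y}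
    (hQ : ContinuousOn (fun p : ℝ × X => Q p.1 p.2) (T ×ˢ univ)) (ht : t ∈ T) {τ : ι → ℝ}
    {f : ι → X} (hτ : Tendsto τ l (𝓝[T] t)) (hf : Tendsto f l (𝓝 x)) :
    Tendsto (fun i => Q (τ i) (f i)) l (𝓝 (Q t x)) := by
  have hpair : Tendsto (fun i => (τ i, f i)) l (𝓝[T ×ˢ univ] (t, x)) := by
    rw [nhdsWithin_prod_eq, nhdsWithin_univ]
    exact hτ.prodMk hf
  exact (hQ (t, x) ⟨ht, mem_univ x⟩).tendsto.comp hpair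

namespace RdContinuousOnTk

variable {X Y Z : Type*} [TopologicalSpace X] [TopologicalSpace Y] [TopologicalSpace Z]
  {T : Set ℝ} {t : ℝ} {f : ℝ → X}

lemma continuousWithinAt_Ici (hf : RdContinuousOnTk T f) (ht : t ∈ tsTk T) :
    ContinuousWithinAt f (tsTk T ∩ Ici t) t := by
  by_cases hσ : tsSigma T t = t
  · exact (hf.continuousWithinAt ht hσ).mono inter_subset_left
  · have hsub : tsTk T ∩ Ici t ⊆ insert t (T ∩ Ioi t) := fun s hs =>
      (mem_Ici.mp hs.2).eq_or_lt.imp Eq.symm fun hts => ⟨hs.1.1, hts⟩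
    refine ContinuousWithinAt.mono ?_ hsub
    rw [ContinuousWithinAt, nhdsWithin_insert, nhdsWithin_inter_Ioi_eq_bot hσ, sup_bot_eq]
    exact tendsto_pure_nhds f t

lemma of_continuousOn (hf : ContinuousOn f (tsTk T)) : RdContinuousOnTk T f where
  continuousWithinAt t ht _ := hf t ht
  exists_tendsto_left t ht := ⟨f t, (hf t ht).mono inter_subset_left⟩

lemma prodMk {g : ℝ → Y} (hf : RdContinuousOnTk T f) (hg : RdContinuousOnTk T g) :
    RdContinuousOnTk T fun t => (f t, g t) where
  continuousWithinAt _ ht hσ :=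
    (hf.continuousWithinAt ht hσ).prodMk (hg.continuousWithinAt ht hσ)
  exists_tendsto_left _ ht :=
    let ⟨l, hl⟩ := hf.exists_tendsto_left ht
    let ⟨m, hm⟩ := hg.exists_tendsto_left ht
    ⟨(l, m), hl.prodMk_nhds hm⟩

lemma comp_continuousOn {Q : ℝ → X → Y}
    (hQ : ContinuousOn (fun p : ℝ × X => Q p.1 p.2) (T ×ˢ univ)) (hf : RdContinuousOnTk T f) :
    RdContinuousOnTk T fun t => Q t (f t) where
  continuousWithinAt _ ht hσ :=
    tendsto_comp_of_continuousOn hQ ht.1 (tendsto_id.mono_left (nhdsWithin_mono _ sdiff_subset))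
      (hf.continuousWithinAt ht hσ)
  exists_tendsto_left t ht :=
    let ⟨l, hl⟩ := hf.exists_tendsto_left ht
    ⟨Q t l, tendsto_comp_of_continuousOn hQ ht.1
      (tendsto_id.mono_left (nhdsWithin_mono _ (inter_subset_left.trans sdiff_subset))) hl⟩

lemma map₂ {q : X → Y → Z} (hq : Continuous fun p : X × Y => q p.1 p.2) {g : ℝ → Y}
    (hf : RdContinuousOnTk T f) (hg : RdContinuousOnTk T g) :
    RdContinuousOnTk T fun t => q (f t) (g t) :=
  (hf.prodMk hg).comp_continuousOn (Q := fun _ p => q p.1 p.2) (hq.comp continuous_snd).continuousOn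

end RdContinuousOnTk

namespace IsTimeInterval

variable {T : Set ℝ} {a b t : ℝ} (hT : IsTimeInterval T a b)

include hT

lemma rdContinuousOnTk {E : Type*} [NormedAddCommGroup E] {f : ℝ → E}
    (hf : RdContinuousOn (tsTk T) f) : RdContinuousOnTk T f where
  continuousWithinAt t ht hσ := (hf t ht).1 (hT.tsSigma_tsTk_eq_self ht hσ)
  exists_tendsto_left t ht := by
    by_cases hρ : tsRho (tsTk T) t = t
    · exact (hf t ht).2 hρ
    · exact ⟨0, by rw [nhdsWithin_inter_Iio_eq_bot hρ]; exact tendsto_bot⟩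

lemma continuousWithinAt_tsSigma (ht : t ∈ T) (hσ : tsSigma T t = t) :
    ContinuousWithinAt (tsSigma T) T t := by
  rw [ContinuousWithinAt, hσ]
  refine tendsto_order.mpr ⟨fun l hl => ?_, fun u hu => ?_⟩
  · filter_upwards [mem_nhdsWithin_of_mem_nhds (Ioi_mem_nhds hl)] with s hs
    exact hs.trans_le (le_tsSigma T s)
  · rcases (hT.le_right ht).eq_or_lt with rfl | htb
    · filter_upwards [self_mem_nhdsWithin] with s hs
      exact (hT.le_right (hT.tsSigma_mem hs)).trans_lt hu
    · obtain ⟨r, hr, htr, hru⟩ :=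
        exists_mem_Ioo_of_tsSigma_lt hT.right_mem htb (hσ.trans_lt hu)
      filter_upwards [mem_nhdsWithin_of_mem_nhds (Iio_mem_nhds htr)] with s hs
      exact (tsSigma_le_of_mem hr hs).trans_lt hru

lemma tendsto_tsSigma_left (ht : t ∈ T) : Tendsto (tsSigma T) (𝓝[T ∩ Iio t] t) (𝓝[T] t) := by
  refine tendsto_nhdsWithin_iff.mpr ⟨?_, ?_⟩
  · refine tendsto_of_tendsto_of_tendsto_of_le_of_le' (tendsto_id.mono_left nhdsWithin_le_nhds)
      tendsto_const_nhds (Eventually.of_forall (le_tsSigma T)) ?_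
    filter_upwards [self_mem_nhdsWithin] with s hs using tsSigma_le_of_mem ht hs.2
  · filter_upwards [self_mem_nhdsWithin] with s hs using hT.tsSigma_mem hs.1

lemma rdContinuousOnTk_comp_tsSigma {X : Type*} [TopologicalSpace X] {F : ℝ → X}
    (hF : ContinuousOn F T) : RdContinuousOnTk T fun t => F (tsSigma T t) where
  continuousWithinAt _ ht hσ :=
    ((hF _ (hT.tsSigma_mem ht.1)).comp (hT.continuousWithinAt_tsSigma ht.1 hσ)
      fun _ hs => hT.tsSigma_mem hs).mono sdiff_subset
  exists_tendsto_left t ht :=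
    ⟨F t, (hF t ht.1).tendsto.comp ((hT.tendsto_tsSigma_left ht.1).mono_left
      (nhdsWithin_mono _ (inter_subset_inter_left _ sdiff_subset)))⟩

end IsTimeInterval

lemma RdContinuousOnTk.exists_norm_le {E : Type*} [NormedAddCommGroup E] {T : Set ℝ} {a b : ℝ}
    {f : ℝ → E} (hf : RdContinuousOnTk T f) (hT : IsTimeInterval T a b) :
    ∃ C, ∀ t ∈ tsTk T, ‖f t‖ ≤ C := by
  refine hT.isCompact_tsTk.induction_on ⟨0, by simp⟩
    (fun _ _ hst ⟨C, hC⟩ => ⟨C, fun t ht => hC t (hst ht)⟩) ?_ fun t ht => ?_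
  · rintro s t ⟨C, hC⟩ ⟨D, hD⟩
    exact ⟨max C D, fun u hu => hu.elim (fun h => le_max_of_le_left (hC u h))
      fun h => le_max_of_le_right (hD u h)⟩
  · obtain ⟨l, hl⟩ := hf.exists_tendsto_left ht
    have hleft := hl.norm.eventually_le_const (lt_add_one ‖l‖)
    have hright := (hf.continuousWithinAt_Ici ht).norm.eventually_le_const (lt_add_one ‖f t‖)
    have hbound : ∀ᶠ s in 𝓝[tsTk T] t, ‖f s‖ ≤ max (‖l‖ + 1) (‖f t‖ + 1) := by
      rw [nhdsWithin_eq_left_sup_right, eventually_sup]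
      exact ⟨hleft.mono fun s hs => le_max_of_le_left hs,
        hright.mono fun s hs => le_max_of_le_right hs⟩
    exact ⟨_, hbound, _, fun s hs => hs⟩

/-- The largest point of `T^k` that is at most `u`, extended by `a` to `u < a` so that the map is
monotone on the whole line. -/
def tkFloor (T : Set ℝ) (a u : ℝ) : ℝ := sSup (tsTk T ∩ Iic (max u a))

/-- The delta integral of `f` over `T = [a, b] ∩ 𝕋₀`, as the Lebesgue integral of the extension of
`f` that is constant on every gap of `T`. -/
def deltaIntegral {E : Type*} [NormedAddCommGroup E] [NormedSpace ℝ E] (T : Set ℝ) (a b : ℝ)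
    (f : ℝ → E) : E :=
  ∫ u in a..b, f (tkFloor T a u)

namespace IsTimeInterval

variable {T : Set ℝ} {a b s t u : ℝ} (hT : IsTimeInterval T a b)

include hT

lemma isGreatest_tkFloor (u : ℝ) : IsGreatest (tsTk T ∩ Iic (max u a)) (tkFloor T a u) :=
  (hT.isCompact_tsTk.inter_right isClosed_Iic).isGreatest_sSup
    ⟨a, hT.left_mem_tsTk, le_max_right u a⟩

lemma tkFloor_mem (u : ℝ) : tkFloor T a u ∈ tsTk T := (hT.isGreatest_tkFloor u).1.1

lemma tkFloor_le (hu : a ≤ u) : tkFloor T a u ≤ u :=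
  (hT.isGreatest_tkFloor u).1.2.trans_eq (max_eq_left hu)

lemma le_tkFloor (ht : t ∈ tsTk T) (htu : t ≤ u) : t ≤ tkFloor T a u :=
  (hT.isGreatest_tkFloor u).2 ⟨ht, le_max_of_le_left htu⟩

lemma tkFloor_eq_self (ht : t ∈ tsTk T) : tkFloor T a t = t :=
  (hT.tkFloor_le (hT.left_le ht.1)).antisymm (hT.le_tkFloor ht le_rfl)

lemma monotone_tkFloor : Monotone (tkFloor T a) := fun u v huv =>
  (hT.isGreatest_tkFloor u).mono (hT.isGreatest_tkFloor v)
    (inter_subset_inter_right _ (Iic_subset_Iic.mpr (max_le_max_right a huv)))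

lemma tkFloor_eq_of_mem_Ico (ht : t ∈ tsTk T) (hu : u ∈ Ico t (tsSigma T t)) :
    tkFloor T a u = t := by
  refine (hT.le_tkFloor ht hu.1).antisymm' (not_lt.mp fun hlt => ?_)
  have hσ := tsSigma_le_of_mem (hT.tkFloor_mem u).1 hlt
  exact (hσ.trans (hT.tkFloor_le ((hT.left_le ht.1).trans hu.1))).not_gt hu.2

lemma tkFloor_mem_uIcc (ht : t ∈ tsTk T) (hs : s ∈ T) (hu : u ∈ uIcc t s) :
    tkFloor T a u ∈ uIcc t s := by
  rcases le_or_gt t s with hts | hst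
  · rw [uIcc_of_le hts] at *
    exact ⟨hT.le_tkFloor ht hu.1, (hT.tkFloor_le ((hT.left_le ht.1).trans hu.1)).trans hu.2⟩
  · have hsk := hT.mem_tsTk_of_lt hs (hst.trans_le (hT.le_right ht.1))
    have h := hT.monotone_tkFloor.mapsTo_uIcc hu
    rwa [hT.tkFloor_eq_self ht, hT.tkFloor_eq_self hsk] at h

lemma tendsto_tkFloor_right (ht : t ∈ tsTk T) :
    Tendsto (tkFloor T a) (𝓝[≥] t) (𝓝[tsTk T ∩ Ici t] t) := by
  have hge : ∀ᶠ u in 𝓝[≥] t, tkFloor T a u ∈ tsTk T ∩ Ici t := by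
    filter_upwards [self_mem_nhdsWithin] with u hu using ⟨hT.tkFloor_mem u, hT.le_tkFloor ht hu⟩
  refine tendsto_nhdsWithin_iff.mpr ⟨?_, hge⟩
  refine tendsto_of_tendsto_of_tendsto_of_le_of_le' tendsto_const_nhds
    (tendsto_id.mono_left nhdsWithin_le_nhds) (hge.mono fun u hu => hu.2) ?_
  filter_upwards [self_mem_nhdsWithin] with u hu using hT.tkFloor_le ((hT.left_le ht.1).trans hu)

end IsTimeInterval

namespace RdContinuousOnTk

variable {E : Type*} [NormedAddCommGroup E] {T : Set ℝ} {a b : ℝ} {f : ℝ → E}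

lemma stronglyMeasurable_comp_tkFloor (hf : RdContinuousOnTk T f) (hT : IsTimeInterval T a b) :
    StronglyMeasurable fun u => f (tkFloor T a u) := by
  have hcountable : {t : tsTk T | ¬ ContinuousAt ((tsTk T).domRestrict f) t}.Countable := by
    have hscattered := (countable_setOfPred_isolated_right_within (s := T)).preimage
      (Subtype.val_injective (p := (· ∈ tsTk T)))
    refine Countable.mono (fun t ht => ?_) hscattered
    refine ⟨t.2.1, nhdsWithin_inter_Ioi_eq_bot fun hσ => ht ?_⟩
    exact (continuousWithinAt_iff_continuousAt_domRestrict f t.2).mp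
      (hf.continuousWithinAt t.2 hσ)
  exact (StronglyMeasurable.of_countable_not_continuousAt hcountable).comp_measurable
    (hT.monotone_tkFloor.measurable.subtype_mk (h := hT.tkFloor_mem))

lemma intervalIntegrable (hf : RdContinuousOnTk T f) (hT : IsTimeInterval T a b) (c d : ℝ) :
    IntervalIntegrable (fun u => f (tkFloor T a u)) volume c d := by
  obtain ⟨C, hC⟩ := hf.exists_norm_le hT
  refine (intervalIntegrable_const (c := C)).mono_fun
    (hf.stronglyMeasurable_comp_tkFloor hT).aestronglyMeasurable (Eventually.of_forall fun u => ?_)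
  exact (hC _ (hT.tkFloor_mem u)).trans (le_abs_self C)

end RdContinuousOnTk

section FundamentalTheorem

variable {E : Type*} [NormedAddCommGroup E] [NormedSpace ℝ E] [CompleteSpace E]
  {T : Set ℝ} {a b t : ℝ} {f F : ℝ → E}

lemma RdContinuousOnTk.deltaDiffAt_primitive_of_rightDense (hf : RdContinuousOnTk T f)
    (hT : IsTimeInterval T a b) (ht : t ∈ tsTk T) (hσ : tsSigma T t = t) :
    deltaDiffAt T (fun s => ∫ u in a..s, f (tkFloor T a u)) t (f t) := by
  intro ε hε
  obtain ⟨δ, hδ, hclose⟩ :=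
    Metric.continuousWithinAt_iff.mp (hf.continuousWithinAt ht hσ) ε hε
  refine ⟨δ, hδ, fun s ⟨hs, hsδ⟩ => ?_⟩
  have hint := hf.intervalIntegrable hT
  have hconst : (t - s) • f t = ∫ _ in s..t, f t := (intervalIntegral.integral_const _).symm
  rw [hσ, intervalIntegral.integral_interval_sub_left (hint _ _) (hint _ _), hconst,
    ← intervalIntegral.integral_sub (hint _ _) intervalIntegrable_const]
  refine intervalIntegral.norm_integral_le_of_norm_le_const fun u hu => ?_
  have hτ := hT.tkFloor_mem_uIcc ht hs (uIcc_comm s t ▸ uIoc_subset_uIcc hu)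
  have hdist : |tkFloor T a u - t| < δ := (abs_sub_left_of_mem_uIcc hτ).trans_lt <|
    abs_sub_lt_iff.mpr ⟨by linarith [hsδ.2], by linarith [hsδ.1]⟩
  rw [← dist_eq_norm]
  exact (hclose (hT.tkFloor_mem u) hdist).le

lemma RdContinuousOnTk.isDeltaAntideriv_primitive (hf : RdContinuousOnTk T f)
    (hT : IsTimeInterval T a b) :
    IsDeltaAntideriv T f fun t => ∫ u in a..t, f (tkFloor T a u) := by
  intro t ht
  by_cases hσ : tsSigma T t = t
  · exact hf.deltaDiffAt_primitive_of_rightDense hT ht hσ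
  · have hint := hf.intervalIntegrable hT
    refine deltaDiffAt_of_tsSigma_ne hσ
      (intervalIntegral.continuous_primitive hint a).continuousWithinAt ?_
    rw [intervalIntegral.integral_interval_sub_left (hint _ _) (hint _ _),
      ← intervalIntegral.integral_const]
    refine intervalIntegral.integral_congr_uIoo fun u hu => ?_
    rw [uIoo_of_le (le_tsSigma T t)] at hu
    exact congrArg f (hT.tkFloor_eq_of_mem_Ico ht (Ioo_subset_Ico_self hu))

lemma IsTimeInterval.sub_eq_deltaIntegral (hT : IsTimeInterval T a b) (hF : IsDeltaAntideriv T f F)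
    (hf : RdContinuousOnTk T f) : F b - F a = deltaIntegral T a b f := by
  rw [hT.sub_eq_sub_of_isDeltaAntideriv hF (hf.isDeltaAntideriv_primitive hT),
    intervalIntegral.integral_same, sub_zero, deltaIntegral]

end FundamentalTheorem

lemma RdContinuousOnTk.eq_of_ae_eq {E : Type*} [NormedAddCommGroup E] {T : Set ℝ} {a b t : ℝ}
    {φ : ℝ → E} (hφ : RdContinuousOnTk T φ) (hT : IsTimeInterval T a b) {c : E}
    (h : ∀ᵐ u, u ∈ Ioc a b → φ (tkFloor T a u) = c) (ht : t ∈ tsTk T) : φ t = c := by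
  have h_lt : ∀ s ∈ tsTk T, s < b → φ s = c := fun s hs hsb => by
    have hlim : Tendsto (fun u => φ (tkFloor T a u)) (𝓝[>] s) (𝓝 (φ s)) :=
      ((hφ.continuousWithinAt_Ici hs).tendsto.comp (hT.tendsto_tkFloor_right hs)).mono_left
        (nhdsWithin_mono s Ioi_subset_Ici_self)
    refine tendsto_nhds_unique_of_frequently_eq hlim tendsto_const_nhds ?_
    refine (nhdsGT_basis s).frequently_iff.mpr fun {r} hr => ?_
    obtain ⟨u, hu, hsu, hur⟩ := (Measure.dense_of_ae h).exists_between (lt_min hr hsb)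
    exact ⟨u, ⟨hsu, hur.trans_le (min_le_left _ _)⟩,
      hu ⟨(hT.left_le hs.1).trans_lt hsu, (hur.trans_le (min_le_right _ _)).le⟩⟩
  rcases (hT.le_right ht.1).eq_or_lt with rfl | htb
  · have := hT.nhdsLT_neBot_of_right_mem_tsTk ht
    have hlim := (hφ.continuousWithinAt ht (tsSigma_eq_self_of_isGreatest hT.isGreatest)).mono
      (inter_subset_left (t := Iio t))
    refine tendsto_nhds_unique_of_eventuallyEq hlim.tendsto tendsto_const_nhds ?_
    filter_upwards [self_mem_nhdsWithin] with s hs using h_lt s hs.1 hs.2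
  · exact h_lt t ht htb

section DuBoisReymond

variable {E : Type*} [NormedAddCommGroup E] [NormedSpace ℝ E] [CompleteSpace E]

-- A smooth compactly supported `g` differs by a constant from the mean-zero function `k`, and
-- constants are orthogonal to `φ - ⨍ φ`.
lemma ae_eq_average_of_integral_smul_eq_zero {X : Type*} [NormedAddCommGroup X] [NormedSpace ℝ X]
    [FiniteDimensional ℝ X] [MeasurableSpace X] [BorelSpace X] {m : Measure X} [IsFiniteMeasure m]
    {φ : X → E} (hφ : Integrable φ m)
    (h : ∀ g : X →ᵇ ℝ, ∫ x, g x ∂m = 0 → ∫ x, g x • φ x ∂m = 0) :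
    ∀ᵐ x ∂m, φ x = ⨍ y, φ y ∂m := by
  have hφ₀ : Integrable (fun x => φ x - ⨍ y, φ y ∂m) m := hφ.sub (integrable_const _)
  suffices horth : ∀ g : X → ℝ, ContDiff ℝ ∞ g → HasCompactSupport g →
      ∫ x, g x • (φ x - ⨍ y, φ y ∂m) ∂m = 0 by
    filter_upwards [ae_eq_zero_of_integral_contDiff_smul_eq_zero hφ₀.locallyIntegrable horth]
      with x hx using sub_eq_zero.mp hx
  intro g hg hg_supp
  obtain ⟨C, hC⟩ := hg.continuous.bounded_above_of_compact_support hg_supp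
  let k : X →ᵇ ℝ := .ofNormedAddCommGroup g hg.continuous C hC - .const X (⨍ y, g y ∂m)
  have hk : ∫ x, k x ∂m = 0 := integral_sub_average m g
  have hk_smul {ψ : X → E} (hψ : Integrable ψ m) : Integrable (fun x => k x • ψ x) m :=
    hψ.bdd_smul ‖k‖ k.continuous.aestronglyMeasurable (.of_forall k.norm_coe_le_norm)
  have hc : Integrable (fun x => (⨍ y, g y ∂m) • (φ x - ⨍ y, φ y ∂m)) m := hφ₀.smul _
  calc ∫ x, g x • (φ x - ⨍ y, φ y ∂m) ∂m
      = ∫ x, (k x • (φ x - ⨍ y, φ y ∂m) + (⨍ y, g y ∂m) • (φ x - ⨍ y, φ y ∂m)) ∂m := by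
        refine integral_congr_ae (.of_forall fun x => ?_)
        simp only [← add_smul]
        exact congrArg (· • _) (sub_add_cancel (g x) _).symm
    _ = ∫ x, k x • (φ x - ⨍ y, φ y ∂m) ∂m := by
        rw [integral_add (hk_smul hφ₀) hc, integral_smul,
          integral_sub_average, smul_zero, add_zero]
    _ = ∫ x, k x • φ x ∂m - (∫ x, k x ∂m) • ⨍ y, φ y ∂m := by
        simp only [smul_sub]
        rw [integral_sub (hk_smul hφ) (hk_smul (integrable_const _)), integral_smul_const]
    _ = 0 := by rw [h k hk, hk, zero_smul, sub_zero]

variable {T : Set ℝ} {a b : ℝ} {φ : ℝ → E}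

lemma RdContinuousOnTk.exists_ae_eq_const (hφ : RdContinuousOnTk T φ) (hT : IsTimeInterval T a b)
    (h : ∀ g : ℝ → ℝ, Continuous g → deltaIntegral T a b g = 0 →
      deltaIntegral T a b (fun t => g t • φ t) = 0) :
    ∃ c, ∀ᵐ u, u ∈ Ioc a b → φ (tkFloor T a u) = c := by
  let τ := tkFloor T a
  have hτ : AEMeasurable τ (volume.restrict (Ioc a b)) :=
    hT.monotone_tkFloor.measurable.aemeasurable
  let m := Measure.map τ (volume.restrict (Ioc a b))
  have hφτ : StronglyMeasurable fun u => φ (τ u) := hφ.stronglyMeasurable_comp_tkFloor hT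
  have hττ (u : ℝ) : τ (τ u) = τ u := hT.tkFloor_eq_self (hT.tkFloor_mem u)
  have hφm : Integrable (fun u => φ (τ u)) m := by
    refine (integrable_map_measure hφτ.aestronglyMeasurable hτ).mpr ?_
    simp only [Function.comp_def, hττ]
    exact (hφ.intervalIntegrable hT a b).1
  have horth (g : ℝ →ᵇ ℝ) (hg : ∫ u, g u ∂m = 0) : ∫ u, g u • φ (τ u) ∂m = 0 := by
    rw [integral_map hτ g.continuous.aestronglyMeasurable,
      ← intervalIntegral.integral_of_le hT.lt.le] at hg
    have hgφ : AEStronglyMeasurable (fun u => g u • φ (τ u)) m :=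
      g.continuous.aestronglyMeasurable.smul hφτ.aestronglyMeasurable
    rw [integral_map hτ hgφ]
    simp only [hττ]
    rw [← intervalIntegral.integral_of_le hT.lt.le]
    exact h g g.continuous hg
  have hae := ae_of_ae_map hτ (ae_eq_average_of_integral_smul_eq_zero hφm horth)
  simp only [hττ] at hae
  exact ⟨_, (ae_restrict_iff' measurableSet_Ioc).mp hae⟩

lemma RdContinuousOnTk.exists_eq_const (hφ : RdContinuousOnTk T φ)
    (hT : IsTimeInterval T a b)
    (h : ∀ g : ℝ → ℝ, Continuous g → deltaIntegral T a b g = 0 →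
      deltaIntegral T a b (fun t => g t • φ t) = 0) :
    ∃ c, ∀ t ∈ tsTk T, φ t = c :=
  let ⟨c, hc⟩ := hφ.exists_ae_eq_const hT h
  ⟨c, fun _ ht => hφ.eq_of_ae_eq hT hc ht⟩

end DuBoisReymond

section FirstVariation

variable {X G : Type*} [NormedAddCommGroup X] [NormedSpace ℝ X] {T : Set ℝ} {a b : ℝ}
  {x ξ : ℝ → X}

namespace RdContinuousOnTk

lemma add_smul (hx : RdContinuousOnTk T x) (hξ : RdContinuousOnTk T ξ) (s : ℝ) :
    RdContinuousOnTk T fun t => x t + s • ξ t :=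
  hx.map₂ (q := fun p v => p + s • v) (by fun_prop) hξ

lemma tendstoUniformlyOn_comp_add_smul [UniformSpace G] (hx : RdContinuousOnTk T x)
    (hξ : RdContinuousOnTk T ξ) (hT : IsTimeInterval T a b) {Q : ℝ → X → G}
    (hQ : ContinuousOn (fun p : ℝ × X => Q p.1 p.2) (T ×ˢ univ)) :
    TendstoUniformlyOn (fun s t => Q t (x t + s • ξ t)) (fun t => Q t (x t)) (𝓝 (0 : ℝ))
      (tsTk T) := by
  rw [← tendstoLocallyUniformlyOn_iff_tendstoUniformlyOn_of_compact hT.isCompact_tsTk,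
    tendstoLocallyUniformlyOn_iff_forall_tendsto]
  intro t ht
  have hlim {A : Set ℝ} (hA : A ⊆ tsTk T) {p q : X} (hp : Tendsto x (𝓝[A] t) (𝓝 p))
      (hq : Tendsto ξ (𝓝[A] t) (𝓝 q)) :
      Tendsto (fun z : ℝ × ℝ => (Q z.2 (x z.2), Q z.2 (x z.2 + z.1 • ξ z.2)))
        (𝓝 0 ×ˢ 𝓝[A] t) (uniformity G) := by
    have hτ : Tendsto Prod.snd (𝓝 (0 : ℝ) ×ˢ 𝓝[A] t) (𝓝[T] t) :=
      tendsto_snd.mono_right (nhdsWithin_mono t (hA.trans sdiff_subset))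
    have hs : Tendsto Prod.fst (𝓝 (0 : ℝ) ×ˢ 𝓝[A] t) (𝓝 0) := tendsto_fst
    have hp' : Tendsto (fun z : ℝ × ℝ => x z.2) (𝓝 0 ×ˢ 𝓝[A] t) (𝓝 p) := hp.comp tendsto_snd
    have hq' : Tendsto (fun z : ℝ × ℝ => ξ z.2) (𝓝 0 ×ˢ 𝓝[A] t) (𝓝 q) := hq.comp tendsto_snd
    have hxs : Tendsto (fun z : ℝ × ℝ => x z.2 + z.1 • ξ z.2) (𝓝 0 ×ˢ 𝓝[A] t) (𝓝 p) := by
      simpa only [zero_smul, add_zero] using hp'.add (hs.smul hq')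
    exact ((tendsto_comp_of_continuousOn hQ ht.1 hτ hp').prodMk_nhds
      (tendsto_comp_of_continuousOn hQ ht.1 hτ hxs)).mono_right (nhds_le_uniformity _)
  obtain ⟨p, hp⟩ := hx.exists_tendsto_left ht
  obtain ⟨q, hq⟩ := hξ.exists_tendsto_left ht
  rw [nhdsWithin_eq_left_sup_right, prod_sup, tendsto_sup]
  exact ⟨hlim inter_subset_left hp hq,
    hlim inter_subset_left (hx.continuousWithinAt_Ici ht) (hξ.continuousWithinAt_Ici ht)⟩

lemma exists_eventually_norm_comp_add_smul_le [NormedAddCommGroup G]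
    (hx : RdContinuousOnTk T x) (hξ : RdContinuousOnTk T ξ) (hT : IsTimeInterval T a b)
    {Q : ℝ → X → G} (hQ : ContinuousOn (fun p : ℝ × X => Q p.1 p.2) (T ×ˢ univ)) :
    ∃ C, ∀ᶠ s in 𝓝 (0 : ℝ), ∀ t ∈ tsTk T, ‖Q t (x t + s • ξ t)‖ ≤ C := by
  obtain ⟨C, hC⟩ := (hx.comp_continuousOn hQ).exists_norm_le hT
  refine ⟨C + 1, ?_⟩
  filter_upwards [Metric.tendstoUniformlyOn_iff.mp
    (hx.tendstoUniformlyOn_comp_add_smul hξ hT hQ) 1 one_pos] with s hs t ht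
  have hdist := hs t ht
  rw [dist_eq_norm] at hdist
  linarith [hC t ht, norm_le_norm_add_norm_sub (Q t (x t)) (Q t (x t + s • ξ t))]

variable [NormedAddCommGroup G] [NormedSpace ℝ G]

lemma hasDerivAt_deltaIntegral_add_smul (hx : RdContinuousOnTk T x) (hξ : RdContinuousOnTk T ξ)
    (hT : IsTimeInterval T a b) {Λ : ℝ → X → G} {Λ' : ℝ → X → X →L[ℝ] G}
    (hΛ : ContinuousOn (fun p : ℝ × X => Λ p.1 p.2) (T ×ˢ univ))
    (hΛ' : ContinuousOn (fun p : ℝ × X => Λ' p.1 p.2) (T ×ˢ univ))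
    (hderiv : ∀ t ∈ T, ∀ p, HasFDerivAt (Λ t) (Λ' t p) p) :
    HasDerivAt (fun s : ℝ => deltaIntegral T a b fun t => Λ t (x t + s • ξ t))
      (deltaIntegral T a b fun t => Λ' t (x t) (ξ t)) 0 := by
  have hΛx (s : ℝ) : RdContinuousOnTk T fun t => Λ t (x t + s • ξ t) :=
    (hx.add_smul hξ s).comp_continuousOn hΛ
  have hΛ'x : RdContinuousOnTk T fun t => Λ' t (x t) := hx.comp_continuousOn hΛ'
  have hΛ'xξ : RdContinuousOnTk T fun t => Λ' t (x t) (ξ t) :=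
    hΛ'x.map₂ (q := fun A v => A v) (by fun_prop) hξ
  obtain ⟨C, hC⟩ := hx.exists_eventually_norm_comp_add_smul_le hξ hT hΛ'
  obtain ⟨D, hD⟩ := hξ.exists_norm_le hT
  have hfirst := (intervalIntegral.hasDerivAt_integral_of_dominated_loc_of_deriv_le
    (F := fun s u => Λ (tkFloor T a u) (x (tkFloor T a u) + s • ξ (tkFloor T a u)))
    (F' := fun s u => Λ' (tkFloor T a u) (x (tkFloor T a u) + s • ξ (tkFloor T a u))
      (ξ (tkFloor T a u)))
    (bound := fun _ => C * D) (μ := volume) (a := a) (b := b) (x₀ := 0) hC ?_ ?_ ?_ ?_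
    intervalIntegrable_const ?_).2
  · simpa only [deltaIntegral, zero_smul, add_zero] using hfirst
  · exact .of_forall fun s => ((hΛx s).stronglyMeasurable_comp_tkFloor hT).aestronglyMeasurable
  · exact (hΛx 0).intervalIntegrable hT a b
  · simpa only [zero_smul, add_zero] using
      (hΛ'xξ.stronglyMeasurable_comp_tkFloor hT).aestronglyMeasurable
  · refine .of_forall fun u _ s hs => ?_
    exact ContinuousLinearMap.le_of_opNorm_le_of_le _ (hs _ (hT.tkFloor_mem u))
      (hD _ (hT.tkFloor_mem u))
  · refine .of_forall fun u _ s _ => ?_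
    have hline : HasDerivAt (fun s : ℝ => x (tkFloor T a u) + s • ξ (tkFloor T a u))
        (ξ (tkFloor T a u)) s := by
      simpa only [one_smul, id] using
        ((hasDerivAt_id s).smul_const (ξ (tkFloor T a u))).const_add (x (tkFloor T a u))
    exact (hderiv _ (hT.tkFloor_mem u).1 _).comp_hasDerivAt s hline

end RdContinuousOnTk

end FirstVariation

section WeakLocalMin

variable {E : Type*} [NormedAddCommGroup E] [NormedSpace ℝ E] {T : Set ℝ} {a b : ℝ}
  {L : ℝ → E → E → ℝ} {ys yds : ℝ → E}

/-- `ys`, with delta derivative `yds`, is a weak local minimizer of `y ↦ ∫ L(t, y, y^Δ) Δt` among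
the `y ∈ C¹_rd(T)` with the same endpoint values. The integrals are compared through arbitrary
antiderivatives of the two integrands. -/
def IsWeakLocalMin (T : Set ℝ) (a b : ℝ) (L : ℝ → E → E → ℝ) (ys yds : ℝ → E) : Prop :=
  ∃ δ > 0, ∀ y yd : ℝ → E, C1rd T y yd → y a = ys a → y b = ys b →
    tsSupNorm (tsTk T) (fun t => y t - ys t) + tsSupNorm (tsTk T) (fun t => yd t - yds t) < δ →
    ∀ F G : ℝ → ℝ, IsDeltaAntideriv T (fun t => L t (ys t) (yds t)) F →
      IsDeltaAntideriv T (fun t => L t (y t) (yd t)) G → F b - F a ≤ G b - G a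

lemma tsSupNorm_const_smul (S : Set ℝ) (c : ℝ) (f : ℝ → E) :
    tsSupNorm S (fun t => c • f t) = |c| * tsSupNorm S f := by
  simp only [tsSupNorm, norm_smul, Real.norm_eq_abs]
  rw [← smul_eq_mul, ← Real.sSup_smul_of_nonneg (abs_nonneg c), ← image_smul, image_image]
  rfl

lemma IsTimeInterval.rdContinuousOnTk_of_c1rd (hT : IsTimeInterval T a b) {y yd : ℝ → E}
    (hy : C1rd T y yd) : RdContinuousOnTk T fun t => (y t, yd t) :=
  .prodMk (.of_continuousOn ((hT.continuousOn_of_isDeltaAntideriv hy.1).mono sdiff_subset))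
    (hT.rdContinuousOnTk hy.2)

lemma IsTimeInterval.rdContinuousOnTk_comp_c1rd {X : Type*} [TopologicalSpace X]
    (hT : IsTimeInterval T a b) {Q : ℝ → E → E → X}
    (hQ : ContinuousOn (fun p : ℝ × E × E => Q p.1 p.2.1 p.2.2) (T ×ˢ univ)) {y yd : ℝ → E}
    (hy : C1rd T y yd) : RdContinuousOnTk T fun t => Q t (y t) (yd t) :=
  (hT.rdContinuousOnTk_of_c1rd hy).comp_continuousOn (Q := fun t p => Q t p.1 p.2) hQ

lemma IsWeakLocalMin.isLocalMin_deltaIntegral (hmin : IsWeakLocalMin T a b L ys yds)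
    (hT : IsTimeInterval T a b)
    (hL : ContinuousOn (fun p : ℝ × E × E => L p.1 p.2.1 p.2.2) (T ×ˢ univ))
    (hys : C1rd T ys yds) {η ψ : ℝ → E} (hη : C1rd T η ψ) (hηa : η a = 0) (hηb : η b = 0) :
    IsLocalMin (fun s : ℝ => deltaIntegral T a b fun t =>
      L t (ys t + s • η t) (yds t + s • ψ t)) 0 := by
  obtain ⟨δ, hδ, hle⟩ := hmin
  have hadm (s : ℝ) := hys.add (hη.const_smul s)
  have hlim : Tendsto (fun s : ℝ => |s| * (tsSupNorm (tsTk T) η + tsSupNorm (tsTk T) ψ)) (𝓝 0)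
      (𝓝 0) := by
    simpa only [abs_zero, zero_mul] using
      (continuous_abs.mul_const (tsSupNorm (tsTk T) η + tsSupNorm (tsTk T) ψ)).tendsto 0
  filter_upwards [hlim.eventually_lt_const hδ] with s hs
  have hdist : tsSupNorm (tsTk T) (fun t => ys t + s • η t - ys t) +
      tsSupNorm (tsTk T) (fun t => yds t + s • ψ t - yds t) < δ := by
    simpa only [add_sub_cancel_left, tsSupNorm_const_smul, ← mul_add] using hs
  have hcompare := hle _ _ (hadm s) (by simp [hηa]) (by simp [hηb]) hdist _ _
    ((hT.rdContinuousOnTk_comp_c1rd hL hys).isDeltaAntideriv_primitive hT)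
    ((hT.rdContinuousOnTk_comp_c1rd hL (hadm s)).isDeltaAntideriv_primitive hT)
  simpa only [deltaIntegral, intervalIntegral.integral_same, sub_zero, zero_smul, add_zero]
    using hcompare

end WeakLocalMin

section Lagrangian

variable {E : Type*} [NormedAddCommGroup E] [InnerProductSpace ℝ E] [CompleteSpace E]

/-- The standing assumptions on a Lagrangian: `L` is continuous and has the partial gradients
`Ly` and `Lv`, which are continuous as well. -/
structure IsLagrangian (T : Set ℝ) (L : ℝ → E → E → ℝ) (Ly Lv : ℝ → E → E → E) : Prop where
  continuousOn : ContinuousOn (fun p : ℝ × E × E => L p.1 p.2.1 p.2.2) (T ×ˢ univ)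
  hasGradientAt_left : ∀ t ∈ T, ∀ y v, HasGradientAt (fun z => L t z v) (Ly t y v) y
  hasGradientAt_right : ∀ t ∈ T, ∀ y v, HasGradientAt (fun z => L t y z) (Lv t y v) v
  continuousOn_left : ContinuousOn (fun p : ℝ × E × E => Ly p.1 p.2.1 p.2.2) (T ×ˢ univ)
  continuousOn_right : ContinuousOn (fun p : ℝ × E × E => Lv p.1 p.2.1 p.2.2) (T ×ˢ univ)

/-- The differential of `(y, v) ↦ L t y v`, assembled from the partial gradients of `L`. -/
def lagrangianDeriv (Ly Lv : ℝ → E → E → E) (t : ℝ) (p : E × E) : E × E →L[ℝ] ℝ :=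
  (innerSL ℝ (Ly t p.1 p.2)).coprod (innerSL ℝ (Lv t p.1 p.2))

namespace IsLagrangian

variable {T : Set ℝ} {L : ℝ → E → E → ℝ} {Ly Lv : ℝ → E → E → E}

lemma hasFDerivAt (hL : IsLagrangian T L Ly Lv) {t : ℝ} (ht : t ∈ T) (p : E × E) :
    HasFDerivAt (fun q : E × E => L t q.1 q.2) (lagrangianDeriv Ly Lv t p) p := by
  have hslice {Q : ℝ → E → E → E}
      (hQ : ContinuousOn (fun p : ℝ × E × E => Q p.1 p.2.1 p.2.2) (T ×ˢ univ)) :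
      Continuous fun q : E × E => innerSL ℝ (Q t q.1 q.2) :=
    (innerSL ℝ).continuous.comp (hQ.comp_continuous (.prodMk_right t) fun q => ⟨ht, mem_univ q⟩)
  exact (hasStrictFDerivAt_uncurry_coprod (f₁ := fun y v => innerSL ℝ (Ly t y v))
    (f₂ := fun y v => innerSL ℝ (Lv t y v))
    (.of_forall fun q => (hL.hasGradientAt_left t ht q.1 q.2).hasFDerivAt)
    (.of_forall fun q => (hL.hasGradientAt_right t ht q.1 q.2).hasFDerivAt)
    (hslice hL.continuousOn_left).continuousAt
    (hslice hL.continuousOn_right).continuousAt).hasFDerivAt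

lemma continuousOn_lagrangianDeriv (hL : IsLagrangian T L Ly Lv) :
    ContinuousOn (fun p : ℝ × E × E => lagrangianDeriv Ly Lv p.1 p.2) (T ×ˢ univ) :=
  .continuousLinearMapCoprod ((innerSL ℝ).continuous.comp_continuousOn hL.continuousOn_left)
    ((innerSL ℝ).continuous.comp_continuousOn hL.continuousOn_right)

end IsLagrangian

variable {T : Set ℝ} {a b : ℝ} {L : ℝ → E → E → ℝ} {Ly Lv : ℝ → E → E → E} {ys yds : ℝ → E}

lemma IsWeakLocalMin.firstVariation_eq_zero (hmin : IsWeakLocalMin T a b L ys yds)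
    (hT : IsTimeInterval T a b) (hL : IsLagrangian T L Ly Lv) (hys : C1rd T ys yds)
    {η ψ : ℝ → E} (hη : C1rd T η ψ) (hηa : η a = 0) (hηb : η b = 0) :
    deltaIntegral T a b
      (fun t => ⟪Ly t (ys t) (yds t), η t⟫_ℝ + ⟪Lv t (ys t) (yds t), ψ t⟫_ℝ) = 0 :=
  (hmin.isLocalMin_deltaIntegral hT hL.continuousOn hys hη hηa hηb).hasDerivAt_eq_zero
    ((hT.rdContinuousOnTk_of_c1rd hys).hasDerivAt_deltaIntegral_add_smul
      (hT.rdContinuousOnTk_of_c1rd hη) hT (Λ := fun t p => L t p.1 p.2) hL.continuousOn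
      hL.continuousOn_lagrangianDeriv fun _ ht => hL.hasFDerivAt ht)

end Lagrangian

section IntegrationByParts

variable {E F G : Type*} [NormedAddCommGroup E] [NormedSpace ℝ E] [NormedAddCommGroup F]
  [NormedSpace ℝ F] [NormedAddCommGroup G] [NormedSpace ℝ G] [CompleteSpace G] {T : Set ℝ}
  {a b : ℝ}

lemma IsTimeInterval.deltaIntegral_bilinear_parts (hT : IsTimeInterval T a b)
    (B : E →L[ℝ] F →L[ℝ] G) {k p : ℝ → E} {η ψ : ℝ → F} (hk : IsDeltaAntideriv T p k)
    (hp : RdContinuousOnTk T p) (hη : IsDeltaAntideriv T ψ η) (hψ : RdContinuousOnTk T ψ) :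
    deltaIntegral T a b (fun t => B (k (tsSigma T t)) (ψ t) + B (p t) (η t)) =
      B (k b) (η b) - B (k a) (η a) := by
  have hprod : IsDeltaAntideriv T (fun t => B (k (tsSigma T t)) (ψ t) + B (p t) (η t))
      fun t => B (k t) (η t) :=
    fun t ht => (hk t ht).bilinear B (hη t ht) ht.1
  have hkσ := hT.rdContinuousOnTk_comp_tsSigma (hT.continuousOn_of_isDeltaAntideriv hk)
  have hηc : RdContinuousOnTk T η :=
    .of_continuousOn ((hT.continuousOn_of_isDeltaAntideriv hη).mono sdiff_subset)
  have hB : Continuous fun q : E × F => B q.1 q.2 := by fun_prop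
  have hsum : RdContinuousOnTk T fun t => B (k (tsSigma T t)) (ψ t) + B (p t) (η t) :=
    (hkσ.map₂ (q := fun x y => B x y) hB hψ).map₂ continuous_add
      (hp.map₂ (q := fun x y => B x y) hB hηc)
  exact (hT.sub_eq_deltaIntegral hprod hsum).symm

end IntegrationByParts

section DeltaIntegral

variable {E : Type*} [NormedAddCommGroup E] [NormedSpace ℝ E] {T : Set ℝ} {a b : ℝ}

lemma deltaIntegral_sub {f g : ℝ → E} (hT : IsTimeInterval T a b) (hf : RdContinuousOnTk T f)
    (hg : RdContinuousOnTk T g) :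
    deltaIntegral T a b (fun t => f t - g t) = deltaIntegral T a b f - deltaIntegral T a b g :=
  intervalIntegral.integral_sub (hf.intervalIntegrable hT a b) (hg.intervalIntegrable hT a b)

lemma IsTimeInterval.exists_c1rd_of_deltaIntegral_eq_zero [CompleteSpace E]
    (hT : IsTimeInterval T a b) {ψ : ℝ → E} (hψ : RdContinuousOn (tsTk T) ψ)
    (h : deltaIntegral T a b ψ = 0) : ∃ η, C1rd T η ψ ∧ η a = 0 ∧ η b = 0 :=
  ⟨_, ⟨(hT.rdContinuousOnTk hψ).isDeltaAntideriv_primitive hT, hψ⟩,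
    intervalIntegral.integral_same, h⟩

end DeltaIntegral

section EulerLagrange

variable {E : Type*} [NormedAddCommGroup E] [InnerProductSpace ℝ E] [CompleteSpace E]
  {T : Set ℝ} {a b : ℝ}

-- Testing against `ψ = g • w` with a scalar `g` and a fixed vector `w` reduces this to scalar
-- test functions.
lemma RdContinuousOnTk.exists_eq_const_of_inner {φ : ℝ → E} (hφ : RdContinuousOnTk T φ)
    (hT : IsTimeInterval T a b)
    (h : ∀ η ψ : ℝ → E, C1rd T η ψ → η a = 0 → η b = 0 →
      deltaIntegral T a b (fun t => ⟪φ t, ψ t⟫_ℝ) = 0) :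
    ∃ c, ∀ t ∈ tsTk T, φ t = c := by
  refine hφ.exists_eq_const hT fun g hg hg₀ => ext_inner_left ℝ fun w => ?_
  have hψ : RdContinuousOn (tsTk T) fun t => g t • w :=
    .of_continuousOn (hg.continuousOn.smul continuousOn_const)
  have hψ₀ : deltaIntegral T a b (fun t => g t • w) = 0 := by
    rw [deltaIntegral, intervalIntegral.integral_smul_const]
    exact smul_eq_zero_of_left hg₀ w
  obtain ⟨η, hη, hηa, hηb⟩ := hT.exists_c1rd_of_deltaIntegral_eq_zero hψ hψ₀
  have hgφ : RdContinuousOnTk T fun t => g t • φ t :=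
    .map₂ continuous_smul (.of_continuousOn hg.continuousOn) hφ
  calc ⟪w, deltaIntegral T a b fun t => g t • φ t⟫_ℝ
      = deltaIntegral T a b fun t => ⟪w, g t • φ t⟫_ℝ :=
        ((innerSL ℝ w).intervalIntegral_comp_comm (hgφ.intervalIntegrable hT a b)).symm
    _ = deltaIntegral T a b fun t => ⟪φ t, g t • w⟫_ℝ := by
        simp only [inner_smul_right, real_inner_comm w]
    _ = ⟪w, 0⟫_ℝ := by rw [h η _ hη hηa hηb, inner_zero_right]

variable {L : ℝ → E → E → ℝ} {Ly Lv : ℝ → E → E → E} {ys yds F : ℝ → E}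

lemma IsWeakLocalMin.deltaIntegral_inner_eq_zero (hmin : IsWeakLocalMin T a b L ys yds)
    (hT : IsTimeInterval T a b) (hL : IsLagrangian T L Ly Lv) (hys : C1rd T ys yds)
    (hF : IsDeltaAntideriv T (fun t => Ly t (ys t) (yds t)) F) {η ψ : ℝ → E} (hη : C1rd T η ψ)
    (hηa : η a = 0) (hηb : η b = 0) :
    deltaIntegral T a b (fun t => ⟪Lv t (ys t) (yds t) - F (tsSigma T t), ψ t⟫_ℝ) = 0 := by
  have hLy := hT.rdContinuousOnTk_comp_c1rd hL.continuousOn_left hys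
  have hLv := hT.rdContinuousOnTk_comp_c1rd hL.continuousOn_right hys
  have hFσ := hT.rdContinuousOnTk_comp_tsSigma (hT.continuousOn_of_isDeltaAntideriv hF)
  have hηc : RdContinuousOnTk T η :=
    .of_continuousOn ((hT.continuousOn_of_isDeltaAntideriv hη.1).mono sdiff_subset)
  have hψ := hT.rdContinuousOnTk hη.2
  have hvar := hmin.firstVariation_eq_zero hT hL hys hη hηa hηb
  have hparts : deltaIntegral T a b
      (fun t => ⟪F (tsSigma T t), ψ t⟫_ℝ + ⟪Ly t (ys t) (yds t), η t⟫_ℝ) = 0 :=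
    (hT.deltaIntegral_bilinear_parts (innerSL ℝ) hF hLy hη.1 hψ).trans <| by
      simp only [hηa, hηb, map_zero, sub_zero]
  calc deltaIntegral T a b (fun t => ⟪Lv t (ys t) (yds t) - F (tsSigma T t), ψ t⟫_ℝ)
      = deltaIntegral T a b (fun t =>
          (⟪Ly t (ys t) (yds t), η t⟫_ℝ + ⟪Lv t (ys t) (yds t), ψ t⟫_ℝ) -
            (⟪F (tsSigma T t), ψ t⟫_ℝ + ⟪Ly t (ys t) (yds t), η t⟫_ℝ)) := by
        congr 1 with t
        rw [inner_sub_left]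
        abel
    _ = _ - _ := deltaIntegral_sub hT
        (.map₂ continuous_add (hLy.map₂ continuous_inner hηc) (hLv.map₂ continuous_inner hψ))
        (.map₂ continuous_add (hFσ.map₂ continuous_inner hψ) (hLy.map₂ continuous_inner hηc))
    _ = 0 := by rw [hvar, hparts, sub_zero]

theorem euler_lagrange_delta_integral_form_general (hT : IsTimeInterval T a b)
    (hL : IsLagrangian T L Ly Lv) (hys : C1rd T ys yds) (hmin : IsWeakLocalMin T a b L ys yds)
    (hF : IsDeltaAntideriv T (fun t => Ly t (ys t) (yds t)) F) :
    ∃ c, ∀ t ∈ tsTk T, Lv t (ys t) (yds t) = F (tsSigma T t) + c := by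
  have hLv := hT.rdContinuousOnTk_comp_c1rd hL.continuousOn_right hys
  have hFσ := hT.rdContinuousOnTk_comp_tsSigma (hT.continuousOn_of_isDeltaAntideriv hF)
  have hφ : RdContinuousOnTk T fun t => Lv t (ys t) (yds t) - F (tsSigma T t) :=
    hLv.map₂ continuous_sub hFσ
  obtain ⟨c, hc⟩ := hφ.exists_eq_const_of_inner hT fun η ψ hη hηa hηb =>
    hmin.deltaIntegral_inner_eq_zero hT hL hys hF hη hηa hηb
  exact ⟨c, fun t ht => sub_eq_iff_eq_add'.mp (hc t ht)⟩

end EulerLagrange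

theorem euler_lagrange_delta_integral_form
    {n : ℕ} (hn : 1 ≤ n)
    (T₀ : Set ℝ) (hT₀closed : IsClosed T₀)
    (a b : ℝ) (ha : a ∈ T₀) (hb : b ∈ T₀) (hab : a < b)
    (T : Set ℝ) (hT : T = Icc a b ∩ T₀)
    (hT3 : ∃ c ∈ T, c ≠ a ∧ c ≠ b)
    (L : ℝ → En n → En n → ℝ) (Ly Lv : ℝ → En n → En n → En n)
    (hLc : ContinuousOn (fun p : ℝ × En n × En n => L p.1 p.2.1 p.2.2)
      (T ×ˢ (univ : Set (En n × En n))))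
    (hLC2 : ∀ t ∈ T, ContDiff ℝ 2 (fun p : En n × En n => L t p.1 p.2))
    (hLy : ∀ t ∈ T, ∀ y v : En n, HasGradientAt (fun z => L t z v) (Ly t y v) y)
    (hLv : ∀ t ∈ T, ∀ y v : En n, HasGradientAt (fun z => L t y z) (Lv t y v) v)
    (hLyc : ContinuousOn (fun p : ℝ × En n × En n => Ly p.1 p.2.1 p.2.2)
      (T ×ˢ (univ : Set (En n × En n))))
    (hLvc : ContinuousOn (fun p : ℝ × En n × En n => Lv p.1 p.2.1 p.2.2)
      (T ×ˢ (univ : Set (En n × En n))))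
    (ys yds : ℝ → En n) (hys : C1rd T ys yds)
    (hmin : ∃ δ > 0, ∀ y yd : ℝ → En n, C1rd T y yd →
      y a = ys a → y b = ys b →
      tsSupNorm (tsTk T) (fun t => y t - ys t)
        + tsSupNorm (tsTk T) (fun t => yd t - yds t) < δ →
      ∀ F G : ℝ → ℝ,
        IsDeltaAntideriv T (fun t => L t (ys t) (yds t)) F →
        IsDeltaAntideriv T (fun t => L t (y t) (yd t)) G →
        F b - F a ≤ G b - G a) :
    ∀ F : ℝ → En n, IsDeltaAntideriv T (fun t => Ly t (ys t) (yds t)) F →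
      ∃ c : En n, ∀ t ∈ tsTk T, Lv t (ys t) (yds t) = F (tsSigma T t) + c := by
  subst hT
  exact fun F => euler_lagrange_delta_integral_form_general
    (isTimeInterval_Icc_inter hT₀closed ha hb hab) ⟨hLc, hLy, hLv, hLyc, hLvc⟩ hys hmin
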